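/- Let p be an odd prime, let l be a positive integer and let i be an integer with i > l. Then the p-primary component (i.e. the subgroup of elements of p-power order) of the i-th group cohomology of G = ℤ/2pℤ × ℤ^l with coefficients in ℤ with trivial G-action is isomorphic, as an abelian group, to (ℤ/pℤ)^{2^{l-1}}. -/

import Mathlib

/-!
For a group `K` and a representation `A` of `K`, inflated to `K × ℤ`, let `t` be the generator of
`ℤ`. There is an exact sequence `0 ⟶ A ⟶ coind A ⟶ coind A ⟶ 0` with second map `t - 1`, where
`coind` is coinduction from `K` to `K × ℤ`. By Shapiro's lemma the first map induces the
restriction `Hⁿ(K × ℤ, A) ⟶ Hⁿ(K, A)`, which is split by inflation, so the long exact sequence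
breaks up into `Hⁿ⁺¹(K × ℤ, A) ≃ Hⁿ(K, A) × Hⁿ⁺¹(K, A)`. In positive degrees the integral cohomology
of `ℤ/m` is `ℤ/m` in even degrees and `0` in odd ones, so each further factor `ℤ` after the first
doubles the number of copies of `ℤ/m`; the Chinese remainder theorem then isolates the
`p`-primary component.
-/

open CategoryTheory Limits Rep groupCohomology

universe u

section Shapiro

variable {k G : Type u} [CommRing k] [Group G]

variable (S : Subgroup G)

/-- The unit of the adjunction between restriction to `S` and coinduction from `S`: it sends `a`
to the function `g ↦ g • a`. -/
noncomputable def coindUnit (A : Rep.{u} k G) : A ⟶ coind S.subtype (res S.subtype A) :=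
  resCoindToHom _ _ _ (𝟙 _)

instance (A : Rep.{u} k G) : Mono (coindUnit S A) := by
  rw [Rep.mono_iff_injective]
  intro (a : A) (b : A) h
  have h_one : A.ρ 1 a = A.ρ 1 b := congr_fun (congr_arg Subtype.val h) 1
  rwa [map_one] at h_one

/-- The counit of the adjunction between restriction to `S` and coinduction from `S`: it evaluates
a function at `1`. -/
noncomputable def coindEval (A : Rep.{u} k S) : res S.subtype (coind S.subtype A) ⟶ A :=
  (resCoindHomEquiv.{u} _ _ _).symm (𝟙 _)

/-- The comparison map of Shapiro's lemma: restriction to `S` followed by evaluation at `1`.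
Mathlib's `groupCohomology.coindIso` provides an isomorphism of the same groups, but without
identifying it with this restriction map. -/
noncomputable def shapiroMap (A : Rep.{u} k S) (n : ℕ) :
    groupCohomology (coind S.subtype A) n ⟶ groupCohomology A n :=
  map S.subtype (coindEval S A) n

lemma shortExact_map_coindFunctor {X : ShortComplex (Rep.{u} k S)} (hX : X.ShortExact) :
    (X.map (coindFunctor.{u} k S.subtype)).ShortExact := by
  have := hX.mono_f
  have := hX.epi_g
  have : PreservesLimitsOfSize.{0, 0} (coindFunctor.{u} k S.subtype) :=
    (resCoindAdjunction.{u} k S.subtype).rightAdjoint_preservesLimits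
  exact
    { exact := hX.exact.map_of_mono_of_preservesKernel _ hX.mono_f
        (PreservesLimitsOfShape.preservesLimit)
      mono_f := preserves_mono_of_preservesLimit (coindFunctor.{u} k S.subtype) X.f
      epi_g := inferInstanceAs (Epi ((coindFunctor.{u} k S.subtype).map X.g)) }

lemma shapiroMap_naturality {A B : Rep.{u} k S} (f : A ⟶ B) (n : ℕ) :
    map (MonoidHom.id G) (coindMap S.subtype f) n ≫ shapiroMap S B n =
      shapiroMap S A n ≫ map (MonoidHom.id S) f n := by
  rw [shapiroMap, shapiroMap, ← map_comp, ← map_comp]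
  rfl

lemma δ_comp_shapiroMap {X : ShortComplex (Rep.{u} k S)} (hX : X.ShortExact) (n : ℕ) :
    δ (shortExact_map_coindFunctor S hX) n (n + 1) rfl ≫ shapiroMap S X.X₁ (n + 1) =
      shapiroMap S X.X₃ n ≫ δ hX n (n + 1) rfl :=
  HomologicalComplex.HomologySequence.δ_naturality
    (ShortComplex.homMk
      (S₁ := (X.map (coindFunctor.{u} k S.subtype)).map (cochainsFunctor k G))
      (S₂ := X.map (cochainsFunctor k S))
      (cochainsMap S.subtype (coindEval S X.X₁)) (cochainsMap S.subtype (coindEval S X.X₂))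
      (cochainsMap S.subtype (coindEval S X.X₃)) rfl rfl)
    (map_cochainsFunctor_shortExact (shortExact_map_coindFunctor S hX))
    (map_cochainsFunctor_shortExact hX) n (n + 1) rfl

lemma isIso_shapiroMap_zero (A : Rep.{u} k S) : IsIso (shapiroMap S A 0) := by
  have eval_one (x : groupCohomology (coind S.subtype A) 0) :
      ((H0Iso A).hom (shapiroMap S A 0 x)).1 = ((H0Iso (coind S.subtype A)).hom x).1.1 1 :=
    ConcreteCategory.congr_hom (map_H0Iso_hom_f S.subtype (coindEval S A)) x
  rw [ConcreteCategory.isIso_iff_bijective]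
  refine ⟨fun x y hxy ↦ ?_, fun y ↦ ?_⟩
  · have eq_at_one : ((H0Iso (coind S.subtype A)).hom x).1.1 1 =
        ((H0Iso (coind S.subtype A)).hom y).1.1 1 := by
      rw [← eval_one, ← eval_one, hxy]
    apply (ConcreteCategory.bijective_of_isIso (H0Iso (coind S.subtype A)).hom).1
    refine Subtype.ext <| Subtype.ext <| funext fun g ↦ ?_
    have apply_eq_apply_one (z : (coind S.subtype A).ρ.invariants) : z.1.1 g = z.1.1 1 := by
      rw [← one_mul g]
      exact congr_fun (congr_arg Subtype.val (z.2 g)) 1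
    rw [apply_eq_apply_one, apply_eq_apply_one, eq_at_one]
  · let a := (H0Iso A).hom y
    let f : (coind S.subtype A).ρ.invariants :=
      ⟨⟨fun _ ↦ a.1, fun s _ ↦ (a.2 s).symm⟩, fun _ ↦ rfl⟩
    refine ⟨(H0Iso (coind S.subtype A)).inv f, ?_⟩
    apply (ConcreteCategory.bijective_of_isIso (H0Iso A).hom).1
    refine Subtype.ext ?_
    rw [eval_one]
    simp [f, a]

lemma isZero_groupCohomology_succ_coind_bot (B : Rep.{u} k (⊥ : Subgroup G)) (n : ℕ) :
    IsZero (groupCohomology (coind (⊥ : Subgroup G).subtype B) (n + 1)) :=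
  (isZero_groupCohomology_succ_of_subsingleton B n).of_iso (coindIso B (n + 1))

/-- The short exact sequence `0 ⟶ A ⟶ coind A ⟶ Q ⟶ 0` with middle term coinduced from the trivial
subgroup, used for dimension shifting. -/
noncomputable def effacingComplex (A : Rep.{u} k G) : ShortComplex (Rep.{u} k G) :=
  .mk (coindUnit ⊥ A) (cokernel.π _) (cokernel.condition _)

lemma effacingComplex_shortExact (A : Rep.{u} k G) : (effacingComplex A).ShortExact where
  exact := ShortComplex.exact_cokernel _
  mono_f := inferInstanceAs (Mono (coindUnit ⊥ A))
  epi_g := inferInstanceAs (Epi (cokernel.π (coindUnit ⊥ A)))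

theorem isIso_shapiroMap (A : Rep.{u} k S) (n : ℕ) : IsIso (shapiroMap S A n) := by
  induction n generalizing A with
  | zero => exact isIso_shapiroMap_zero S A
  | succ n ih =>
    have hX := effacingComplex_shortExact A
    have hcX := shortExact_map_coindFunctor S hX
    have isZero_middle : IsZero (groupCohomology (effacingComplex A).X₂ (n + 1)) :=
      isZero_groupCohomology_succ_coind_bot _ n
    have epi_δ := epi_δ_of_isZero hX n isZero_middle
    have epi_δ_coind := epi_δ_of_isZero hcX n (isZero_middle.of_iso (coindIso _ (n + 1)))
    have := ih (effacingComplex A).X₂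
    have := ih (effacingComplex A).X₃
    -- As both `δ`s are surjective, `shapiroMap S A (n + 1)` is surjective because its composite
    -- with `δ` is, and injective by the four lemma.
    have epi_comp_δ := epi_comp' (IsIso.epi_of_iso (shapiroMap S (effacingComplex A).X₃ n)) epi_δ
    have : Epi (shapiroMap S A (n + 1)) :=
      @epi_of_epi_fac _ _ _ _ _ _ _ _ epi_comp_δ (δ_comp_shapiroMap S hX n)
    let φ : mapShortComplex₃ hcX (rfl : n + 1 = n + 1) ⟶ mapShortComplex₃ hX rfl :=
      ShortComplex.homMk (shapiroMap S _ n) (shapiroMap S _ n) (shapiroMap S A (n + 1))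
        (shapiroMap_naturality S _ n).symm (δ_comp_shapiroMap S hX n).symm
    have : Mono (shapiroMap S A (n + 1)) :=
      Abelian.mono_of_epi_of_epi_of_mono (ShortComplex.mapToComposableArrows φ)
        (mapShortComplex₃_exact hcX rfl).exact_toComposableArrows
        (mapShortComplex₃_exact hX rfl).exact_toComposableArrows epi_δ_coind
        (inferInstanceAs (Epi (shapiroMap S (effacingComplex A).X₂ n)))
        (inferInstanceAs (Mono (shapiroMap S (effacingComplex A).X₃ n)))
    exact isIso_of_mono_of_epi _

end Shapiro

section ShortExact

variable {k G : Type u} [CommRing k] [Group G]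

lemma rep_exact_of_forall_exists {X : ShortComplex (Rep.{u} k G)}
    (h : ∀ y : X.X₂, X.g.hom y = 0 → ∃ x : X.X₁, X.f.hom x = y) : X.Exact := by
  rw [← ShortComplex.exact_map_iff_of_faithful _ (forget₂ (Rep.{u} k G) (ModuleCat.{u} k)),
    ShortComplex.moduleCat_exact_iff]
  exact h

lemma nonempty_groupCohomology_linearEquiv_prod_of_isSplitEpi
    {X : ShortComplex (Rep.{u} k G)} (hX : X.ShortExact) (n : ℕ)
    [IsSplitEpi (map (MonoidHom.id G) X.f n)] [IsSplitEpi (map (MonoidHom.id G) X.f (n + 1))] :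
    Nonempty (groupCohomology X.X₁ (n + 1) ≃ₗ[k]
      groupCohomology X.X₃ n × groupCohomology X.X₂ (n + 1)) := by
  have map_g : map (MonoidHom.id G) X.g n = 0 := by
    rw [← cancel_epi (map (MonoidHom.id G) X.f n), comp_zero]
    exact (mapShortComplex₂ X n).zero
  have : Mono (δ hX n (n + 1) rfl) := (mapShortComplex₃_exact hX rfl).mono_g map_g
  exact ⟨(lequivProdOfRightSplitExact
    (f := (section_ (map (MonoidHom.id G) X.f (n + 1))).hom)
    ((ModuleCat.mono_iff_injective (δ hX n (n + 1) rfl)).1 this)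
    (mapShortComplex₁_exact hX rfl).moduleCat_range_eq_ker
    (congr_arg ModuleCat.Hom.hom (IsSplitEpi.id (map (MonoidHom.id G) X.f (n + 1))))).symm⟩

end ShortExact

section ProdInt

lemma map_eq_map_comp_map {k G H K : Type u} [CommRing k] [Group G] [Group H] [Group K]
    {A : Rep.{u} k K} {B : Rep.{u} k H} {C : Rep.{u} k G} {f : H →* K} {g : G →* H} {h : G →* K}
    {φ : res f A ⟶ B} {ψ : res g B ⟶ C} {χ : res h A ⟶ C} (hfg : f.comp g = h)
    (hχ : ∀ a : A, χ.hom a = ψ.hom (φ.hom a)) (n : ℕ) :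
    map h χ n = map f φ n ≫ map g ψ n := by
  subst hfg
  rw [← map_comp]
  congr 1
  ext a
  exact hχ a

lemma exists_int_primitive {V : Type*} [AddCommGroup V] (u : ℤ → V) :
    ∃ F : ℤ → V, ∀ m, F (m + 1) - F m = u m := by
  refine ⟨fun m ↦ ∑ j ∈ Finset.Ico 0 m, u j - ∑ j ∈ Finset.Ico m 0, u j, fun m ↦ ?_⟩
  beta_reduce
  rcases le_or_gt 0 m with hm | hm
  · rw [← Finset.insert_Ico_right_eq_Ico_add_one hm]
    simp [Finset.Ico_eq_empty_of_le hm, Finset.Ico_eq_empty_of_le (show 0 ≤ m + 1 by lia)]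
  · rw [← Finset.insert_Ico_add_one_left_eq_Ico hm]
    simp [Finset.Ico_eq_empty_of_le hm.le, Finset.Ico_eq_empty_of_le (show m + 1 ≤ 0 by lia)]

variable {k K : Type u} [CommRing k] [Group K]

variable (K) in
/-- The subgroup `K` of `K × ℤ`. -/
abbrev leftFactor : Subgroup (K × Multiplicative ℤ) :=
  (MonoidHom.inl K (Multiplicative ℤ)).range

variable (A : Rep.{u} k K)

/-- The inflation of a representation of `K` along the projection `K × ℤ → K`. -/
abbrev inflationProd : Rep.{u} k (K × Multiplicative ℤ) :=
  res (MonoidHom.fst K (Multiplicative ℤ)) A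

/-- The coinduction to `K × ℤ` of a representation `A` of `K`, that is, of the restriction to
`leftFactor K` of the inflation of `A`. -/
noncomputable abbrev coindInflationProd : Rep.{u} k (K × Multiplicative ℤ) :=
  coind (leftFactor K).subtype (res (leftFactor K).subtype (inflationProd A))

lemma one_ofAdd_mem_center (n : ℤ) :
    ((1, .ofAdd n) : K × Multiplicative ℤ) ∈ Submonoid.center (K × Multiplicative ℤ) :=
  Submonoid.mem_center_iff.2 fun g ↦ by simp [Prod.ext_iff, mul_comm]

/-- The endomorphism `t - 1` of the coinduced representation, where the generator `t` of the factor
`ℤ` acts equivariantly because it is central. -/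
noncomputable def shiftSubId : coindInflationProd A ⟶ coindInflationProd A :=
  Rep.ofHom (Representation.IntertwiningMap.centralMul (coindInflationProd A).ρ
    (1, .ofAdd 1) (one_ofAdd_mem_center 1)) - 𝟙 _

lemma shiftSubId_apply (f : coindInflationProd A) (g : K × Multiplicative ℤ) :
    ((shiftSubId A).hom f).1 g = f.1 (g * (1, .ofAdd 1)) - f.1 g := rfl

lemma coindUnit_leftFactor_apply (a : A) (g : K × Multiplicative ℤ) :
    ((coindUnit (leftFactor K) (inflationProd A)).hom a).1 g = A.ρ g.1 a := rfl

lemma coindInflationProd_apply (f : coindInflationProd A) (a : K) (n : ℤ) :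
    f.1 (a, .ofAdd n) = A.ρ a (f.1 (1, .ofAdd n)) := by
  have := f.2 ⟨(a, 1), a, rfl⟩ (1, .ofAdd n)
  simpa using this

/-- The short exact sequence `0 ⟶ A ⟶ coind A ⟶ coind A ⟶ 0` whose second map is `t - 1`. -/
noncomputable def shiftComplex : ShortComplex (Rep.{u} k (K × Multiplicative ℤ)) :=
  .mk (coindUnit (leftFactor K) (inflationProd A)) (shiftSubId A) (by
    ext a g
    calc _ = A.ρ (g.1 * 1) a - A.ρ g.1 a :=
          shiftSubId_apply A ((coindUnit (leftFactor K) (inflationProd A)).hom a) g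
      _ = 0 := by rw [mul_one, sub_self])

lemma shiftComplex_shortExact : (shiftComplex A).ShortExact where
  exact := by
    refine rep_exact_of_forall_exists fun (f : coindInflationProd A) hf ↦ ⟨f.1 1, ?_⟩
    have shift_invariant (g : K × Multiplicative ℤ) : f.1 (g * (1, .ofAdd 1)) = f.1 g :=
      sub_eq_zero.1 ((shiftSubId_apply A f g).symm.trans
        (congr_fun (congr_arg Subtype.val hf) g))
    have constant (n : ℤ) : f.1 (1, .ofAdd n) = f.1 1 := by
      induction n with
      | zero => rfl
      | succ n ih => rw [← ih, ← shift_invariant (1, .ofAdd n), Prod.mk_mul_mk, mul_one, ofAdd_add]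
      | pred n ih =>
        rw [← ih, ← shift_invariant (1, .ofAdd (-n - 1)), Prod.mk_mul_mk, mul_one, ← ofAdd_add,
          sub_add_cancel]
    refine Subtype.ext <| funext fun ⟨a, n⟩ ↦ ?_
    refine (coindUnit_leftFactor_apply A _ _).trans ?_
    rw [← constant n.toAdd, ← coindInflationProd_apply]
    rfl
  mono_f := inferInstanceAs (Mono (coindUnit (leftFactor K) (inflationProd A)))
  epi_g := by
    rw [Rep.epi_iff_surjective]
    intro (u : coindInflationProd A)
    obtain ⟨F, hF⟩ := exists_int_primitive (fun m ↦ u.1 (1, .ofAdd m))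
    let f : coindInflationProd A := ⟨fun g ↦ A.ρ g.1 (F g.2.toAdd), by
      rintro ⟨_, a, rfl⟩ g
      simp⟩
    refine ⟨f, Subtype.ext <| funext fun ⟨a, n⟩ ↦ ?_⟩
    calc _ = A.ρ (a * 1) (F (n.toAdd + 1)) - A.ρ a (F n.toAdd) := shiftSubId_apply A f (a, n)
      _ = A.ρ a (u.1 (1, n)) := by rw [mul_one, ← map_sub, hF]; rfl
      _ = u.1 (a, n) := (coindInflationProd_apply A u a n.toAdd).symm

/-- `coindEval` for `leftFactor K`, transported along `K ≃* leftFactor K`. -/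
noncomputable def coindInflationEval :
    res (MonoidHom.inl K (Multiplicative ℤ)) (coindInflationProd A) ⟶ A :=
  (resFunctor (MonoidHom.inl K (Multiplicative ℤ)).rangeRestrict).map
    (coindEval (leftFactor K) (res (leftFactor K).subtype (inflationProd A)))

instance isIso_map_coindInflationEval (n : ℕ) :
    IsIso (map (MonoidHom.inl K (Multiplicative ℤ)) (coindInflationEval A) n) := by
  obtain ⟨e, he⟩ : ∃ e : K ≃* leftFactor K, ∀ a, (e a : K × Multiplicative ℤ) = (a, 1) :=
    ⟨MonoidHom.ofInjective (Prod.mk_left_injective 1), fun _ ↦ rfl⟩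
  let B := res (leftFactor K).subtype (inflationProd A)
  have equivariant (a : K) : (LinearEquiv.refl k A).toLinearMap ∘ₗ A.ρ a =
      B.ρ (e a) ∘ₗ (LinearEquiv.refl k A).toLinearMap := by
    change A.ρ a = A.ρ (e a : K × Multiplicative ℤ).1
    rw [he]
  have := isIso_shapiroMap (leftFactor K) B n
  have factorization : map (MonoidHom.inl K (Multiplicative ℤ)) (coindInflationEval A) n =
      shapiroMap (leftFactor K) B n ≫
        (mapIso e (B := A) (LinearEquiv.refl k A) equivariant n).inv :=
    map_eq_map_comp_map (MonoidHom.ext he) (fun _ ↦ rfl) n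
  rw [factorization]
  infer_instance

/-- The map on cohomology induced by the first map `A ⟶ coind A` of `shiftComplex A`. -/
noncomputable abbrev mapCoindUnit (n : ℕ) :
    groupCohomology (inflationProd A) n ⟶ groupCohomology (coindInflationProd A) n :=
  map (A := inflationProd A) (MonoidHom.id (K × Multiplicative ℤ))
    (coindUnit (leftFactor K) (inflationProd A)) n

lemma inflation_comp_mapCoindUnit_comp_restriction (n : ℕ) :
    map (MonoidHom.fst K (Multiplicative ℤ)) (𝟙 (inflationProd A)) n ≫ mapCoindUnit A n ≫
      map (MonoidHom.inl K (Multiplicative ℤ)) (coindInflationEval A) n = 𝟙 _ := by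
  let φ : res (MonoidHom.inl K (Multiplicative ℤ)) (inflationProd A) ⟶ A := 𝟙 A
  rw [mapCoindUnit, ← map_eq_map_comp_map (χ := φ) rfl,
    ← map_eq_map_comp_map (h := MonoidHom.id K) (χ := 𝟙 A) rfl]
  · exact map_id (B := A) n
  · exact fun _ ↦ rfl
  · exact fun a ↦ (LinearMap.congr_fun (map_one A.ρ) a).symm

instance (n : ℕ) : IsSplitEpi (mapCoindUnit A n) := by
  have retract := inflation_comp_mapCoindUnit_comp_restriction A n
  refine IsSplitEpi.mk' ⟨map (MonoidHom.inl K (Multiplicative ℤ)) (coindInflationEval A) n ≫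
    map (MonoidHom.fst K (Multiplicative ℤ)) (𝟙 (inflationProd A)) n, ?_⟩
  rw [← cancel_mono (map (MonoidHom.inl K (Multiplicative ℤ)) (coindInflationEval A) n)]
  simp only [Category.assoc, retract, Category.comp_id, Category.id_comp]

theorem nonempty_groupCohomology_inflationProd_linearEquiv (n : ℕ) :
    Nonempty (groupCohomology (inflationProd A) (n + 1) ≃ₗ[k]
      groupCohomology A n × groupCohomology A (n + 1)) := by
  have (n : ℕ) : IsSplitEpi (map (A := (shiftComplex A).X₁) (MonoidHom.id (K × Multiplicative ℤ))
      (shiftComplex A).f n) :=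
    inferInstanceAs (IsSplitEpi (mapCoindUnit A n))
  obtain ⟨e⟩ :=
    nonempty_groupCohomology_linearEquiv_prod_of_isSplitEpi (shiftComplex_shortExact A) n
  let restriction (n : ℕ) : groupCohomology (coindInflationProd A) n ≃ₗ[k] groupCohomology A n :=
    (asIso (map (MonoidHom.inl K (Multiplicative ℤ)) (coindInflationEval A) n)).toLinearEquiv
  exact ⟨e.trans ((restriction n).prodCongr (restriction (n + 1)))⟩

/- Additive rather than `k`-linear, because for `k = ℤ` the two `ℤ`-module structures on the product
are not reducibly equal. -/
lemma nonempty_groupCohomology_trivial_addEquiv_of_mulEquiv_prod {G : Type u} [Group G]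
    (φ : G ≃* K × Multiplicative ℤ) (V : Type u) [AddCommGroup V] [Module k V] (n : ℕ) :
    Nonempty (groupCohomology (Rep.trivial k G V) (n + 1) ≃+
      groupCohomology (Rep.trivial k K V) n × groupCohomology (Rep.trivial k K V) (n + 1)) := by
  obtain ⟨e⟩ := nonempty_groupCohomology_inflationProd_linearEquiv (Rep.trivial k K V) n
  let transport := mapIso φ (A := Rep.trivial k (K × Multiplicative ℤ) V)
    (B := Rep.trivial k G V) (LinearEquiv.refl k V) (fun _ ↦ rfl) (n + 1)
  exact ⟨(transport.toLinearEquiv.trans e).toAddEquiv⟩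

end ProdInt

section Cyclic

variable {G : Type} [CommGroup G]

lemma norm_trivial_int_apply [Fintype G] (y : ℤ) :
    (Rep.trivial ℤ G ℤ).norm.hom y = Nat.card G * y := by
  rw [Nat.card_eq_fintype_card]
  refine Eq.trans ?_ (nsmul_eq_mul (Fintype.card G) y)
  simp [Rep.norm, Representation.norm]

variable [Finite G] [IsCyclic G] {i : ℕ}

lemma subsingleton_groupCohomology_trivial_int_of_odd (hi : Odd i) :
    Subsingleton (groupCohomology (Rep.trivial ℤ G ℤ) i) := by
  have := Fintype.ofFinite G
  obtain ⟨g, hg⟩ := IsCyclic.exists_generator (α := G)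
  refine ModuleCat.subsingleton_of_isZero
    (IsZero.of_iso ?_ (FiniteCyclicGroup.groupCohomologyIsoOdd (Rep.trivial ℤ G ℤ) g hg i hi))
  rw [← ShortComplex.exact_iff_isZero_homology, ShortComplex.moduleCat_exact_iff]
  intro (x : ℤ) hx
  have card_mul_eq_zero : (Nat.card G : ℤ) * x = 0 := (norm_trivial_int_apply x).symm.trans hx
  have hx0 : x = 0 :=
    (mul_eq_zero.1 card_mul_eq_zero).resolve_left (Nat.cast_ne_zero.2 Nat.card_pos.ne')
  exact ⟨(0 : ℤ), hx0.symm⟩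

lemma nonempty_groupCohomology_trivial_int_addEquiv_zmod_of_even [NeZero i] (hi : Even i) :
    Nonempty (groupCohomology (Rep.trivial ℤ G ℤ) i ≃+ ZMod (Nat.card G)) := by
  have := Fintype.ofFinite G
  obtain ⟨g, hg⟩ := IsCyclic.exists_generator (α := G)
  let A := Rep.trivial ℤ G ℤ
  let π := FiniteCyclicGroup.groupCohomologyπEven A g hg i hi
  have mem_ker (x : ℤ) : x ∈ LinearMap.ker (applyAsHom A g - 𝟙 A).hom.toLinearMap := sub_self x
  let q : ℤ →+ groupCohomology A i :=
    π.hom.toAddMonoidHom.comp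
      { toFun := fun x ↦ ⟨x, mem_ker x⟩, map_zero' := rfl, map_add' := fun _ _ ↦ rfl }
  have q_surjective : Function.Surjective q := by
    have : Epi (ShortComplex.moduleCatCyclesIso (FiniteCyclicGroup.normHomCompSub A g)).inv :=
      IsIso.epi_of_iso _
    have : Epi π := epi_comp' this (epi_comp _ _)
    intro y
    obtain ⟨x, rfl⟩ := (ModuleCat.epi_iff_surjective π).1 this y
    exact ⟨x.1, rfl⟩
  have ker_q : q.ker = AddSubgroup.zmultiples (Nat.card G : ℤ) := by
    ext x
    rw [AddMonoidHom.mem_ker, Int.mem_zmultiples_iff]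
    refine (FiniteCyclicGroup.groupCohomologyπEven_eq_zero_iff A g hg i hi ⟨x, mem_ker x⟩).trans ?_
    exact exists_congr fun y ↦ eq_comm.trans (Eq.congr_right (norm_trivial_int_apply y))
  exact ⟨(QuotientAddGroup.quotientKerEquivOfSurjective q q_surjective).symm.trans <|
    (QuotientAddGroup.quotientAddEquivOfEq ker_q).trans <|
      Int.quotientZMultiplesEquivZMod (Nat.card G)⟩

lemma nonempty_prod_groupCohomology_trivial_int_addEquiv_zmod (n : ℕ) [NeZero n] :
    Nonempty (groupCohomology (Rep.trivial ℤ G ℤ) n × groupCohomology (Rep.trivial ℤ G ℤ) (n + 1) ≃+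
      ZMod (Nat.card G)) := by
  rcases n.even_or_odd with hn | hn
  · obtain ⟨e⟩ := nonempty_groupCohomology_trivial_int_addEquiv_zmod_of_even (G := G) hn
    have := subsingleton_groupCohomology_trivial_int_of_odd (G := G) hn.add_one
    have : Unique (groupCohomology (Rep.trivial ℤ G ℤ) (n + 1)) := uniqueOfSubsingleton 0
    exact ⟨AddEquiv.prodUnique.trans e⟩
  · obtain ⟨e⟩ := nonempty_groupCohomology_trivial_int_addEquiv_zmod_of_even (G := G) hn.add_one
    have := subsingleton_groupCohomology_trivial_int_of_odd (G := G) hn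
    have : Unique (groupCohomology (Rep.trivial ℤ G ℤ) n) := uniqueOfSubsingleton 0
    exact ⟨AddEquiv.uniqueProd.trans e⟩

end Cyclic

section CyclicProdFree

/-- The group `ℤ/m × ℤˡ`, written multiplicatively. -/
abbrev CyclicProdFree (m l : ℕ) : Type := Multiplicative (ZMod m × (Fin l → ℤ))

lemma isCyclic_cyclicProdFree_zero (m : ℕ) : IsCyclic (CyclicProdFree m 0) := by
  let e : ZMod m × (Fin 0 → ℤ) ≃+ ZMod m := .prodUnique
  exact isCyclic_multiplicative_iff.2 (e.isAddCyclic.2 inferInstance)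

/-- Splitting off the last coordinate of `ℤˡ⁺¹`. -/
def cyclicProdFreeSuccEquiv (m l : ℕ) :
    CyclicProdFree m (l + 1) ≃* CyclicProdFree m l × Multiplicative ℤ where
  toFun x := (.ofAdd (x.toAdd.1, Fin.init x.toAdd.2), .ofAdd (x.toAdd.2 (Fin.last l)))
  invFun y := .ofAdd (y.1.toAdd.1, Fin.snoc y.1.toAdd.2 y.2.toAdd)
  left_inv x := congrArg Multiplicative.ofAdd (Prod.ext rfl (Fin.snoc_init_self x.toAdd.2))
  right_inv y := by simp
  map_mul' _ _ := rfl

lemma nonempty_prod_addEquiv_pi_of_sum_equiv {H₁ H₂ M α β γ : Type*} [AddCommMonoid H₁]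
    [AddCommMonoid H₂] [AddCommMonoid M] (σ : α ⊕ β ≃ γ) (e₁ : H₁ ≃+ (α → M)) (e₂ : H₂ ≃+ (β → M)) :
    Nonempty (H₁ × H₂ ≃+ (γ → M)) :=
  ⟨(e₁.prodCongr e₂).trans <|
    (LinearEquiv.sumArrowLequivProdArrow α β ℕ M).symm.toAddEquiv.trans <|
      AddEquiv.arrowCongr σ (.refl M)⟩

theorem nonempty_groupCohomology_cyclicProdFree_addEquiv (m : ℕ) [NeZero m] (l i : ℕ)
    (hi : l + 1 < i) :
    Nonempty (groupCohomology (Rep.trivial ℤ (CyclicProdFree m (l + 1)) ℤ) i ≃+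
      (Fin (2 ^ l) → ZMod m)) := by
  induction l generalizing i with
  | zero =>
    obtain ⟨n, rfl⟩ : ∃ n, i = n + 1 := ⟨i - 1, by lia⟩
    have : NeZero n := ⟨by lia⟩
    have := isCyclic_cyclicProdFree_zero m
    have : Finite (CyclicProdFree m 0) := inferInstanceAs (Finite (ZMod m × (Fin 0 → ℤ)))
    have card_eq : Nat.card (CyclicProdFree m 0) = m := by
      simp [CyclicProdFree]
    obtain ⟨e⟩ := nonempty_groupCohomology_trivial_addEquiv_of_mulEquiv_prod (k := ℤ)
      (cyclicProdFreeSuccEquiv m 0) ℤ n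
    obtain ⟨e_zmod⟩ := nonempty_prod_groupCohomology_trivial_int_addEquiv_zmod
      (G := CyclicProdFree m 0) n
    rw [card_eq] at e_zmod
    exact ⟨(e.trans e_zmod).trans (LinearEquiv.funUnique (Fin 1) ℤ (ZMod m)).symm.toAddEquiv⟩
  | succ l ih =>
    obtain ⟨n, rfl⟩ : ∃ n, i = n + 1 := ⟨i - 1, by lia⟩
    obtain ⟨e⟩ := nonempty_groupCohomology_trivial_addEquiv_of_mulEquiv_prod (k := ℤ)
      (cyclicProdFreeSuccEquiv m (l + 1)) ℤ n
    obtain ⟨e₁⟩ := ih n (by lia)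
    obtain ⟨e₂⟩ := ih (n + 1) (by lia)
    let σ : Fin (2 ^ l) ⊕ Fin (2 ^ l) ≃ Fin (2 ^ (l + 1)) :=
      finSumFinEquiv.trans (finCongr (by lia))
    obtain ⟨e₁₂⟩ := nonempty_prod_addEquiv_pi_of_sum_equiv σ e₁ e₂
    exact ⟨e.trans e₁₂⟩

end CyclicProdFree

section PrimaryComponent

open AddCommGroup

variable {G A B ι : Type*} [AddCommGroup G] [AddCommGroup A] [AddCommGroup B]

lemma nonempty_primaryComponent_addEquiv_of_prod {p n c : ℕ} (e : G ≃+ A × B)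
    (hA : ∀ a : A, p ^ n • a = 0) (hB : ∀ b : B, c • b = 0) (hpc : p.Coprime c) :
    Nonempty (primaryComponent G p ≃+ A) := by
  let j : A →+ G := e.symm.toAddMonoidHom.comp (AddMonoidHom.inl A B)
  have j_injective : Function.Injective j := e.symm.injective.comp (Prod.mk_left_injective 0)
  have range_j : j.range = primaryComponent G p := by
    ext x
    rw [mem_primaryComponent]
    constructor
    · rintro ⟨a, rfl⟩
      exact ⟨n, by rw [← map_nsmul, hA, map_zero]⟩
    · rintro ⟨k, hk⟩
      have snd_eq_zero : (e x).2 = 0 := by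
        have pow_smul : p ^ k • (e x).2 = 0 :=
          congrArg Prod.snd (by rw [← map_nsmul, hk, map_zero] : p ^ k • e x = 0)
        rw [← AddMonoid.addOrderOf_eq_one_iff]
        exact Nat.eq_one_of_dvd_coprimes (hpc.pow_left k) (addOrderOf_dvd_of_nsmul_eq_zero pow_smul)
          (addOrderOf_dvd_of_nsmul_eq_zero (hB _))
      exact ⟨(e x).1, e.symm_apply_eq.2 (Prod.ext rfl snd_eq_zero.symm)⟩
  exact ⟨((AddMonoidHom.ofInjective j_injective).trans (AddEquiv.addSubgroupCongr range_j)).symm⟩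

lemma nonempty_primaryComponent_addEquiv_pi_zmod {p n c : ℕ} (e : G ≃+ (ι → ZMod (c * p ^ n)))
    (hpc : p.Coprime c) : Nonempty (primaryComponent G p ≃+ (ι → ZMod (p ^ n))) := by
  let crt : ZMod (p ^ n * c) ≃+ ZMod (p ^ n) × ZMod c :=
    (ZMod.chineseRemainder (hpc.pow_left n)).toAddEquiv
  let split : (ι → ZMod (p ^ n) × ZMod c) ≃+ (ι → ZMod (p ^ n)) × (ι → ZMod c) :=
    { Equiv.arrowProdEquivProdArrow ι _ _ with map_add' := fun _ _ ↦ rfl }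
  rw [mul_comm] at e
  refine nonempty_primaryComponent_addEquiv_of_prod
    ((e.trans (AddEquiv.piCongrRight fun _ ↦ crt)).trans split) (n := n) (c := c)
    (fun a ↦ ?_) (fun b ↦ ?_) hpc
  · ext; simp
  · ext; simp

end PrimaryComponent

theorem primaryComponent_groupCohomology_centralizer_general (p n c : ℕ) [NeZero p] [NeZero c]
    (hpc : p.Coprime c) (l : ℕ) (hl : 0 < l) (i : ℕ) (hi : l < i) :
    Nonempty
      ((AddCommGroup.primaryComponent
          (groupCohomology
            (Rep.trivial ℤ (Multiplicative (ZMod (c * p ^ n) × (Fin l → ℤ))) ℤ) i) p) ≃+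
        (Fin (2 ^ (l - 1)) → ZMod (p ^ n))) := by
  obtain ⟨k, rfl⟩ : ∃ k, l = k + 1 := ⟨l - 1, by lia⟩
  obtain ⟨e⟩ := nonempty_groupCohomology_cyclicProdFree_addEquiv (c * p ^ n) k i hi
  exact nonempty_primaryComponent_addEquiv_pi_zmod e hpc

/-- Let `p` be an odd prime, `l` a positive integer and `i > l`. The `p`-primary component
of the `i`-th group cohomology of `G = ℤ/2pℤ × ℤˡ` (with trivial action on `ℤ`) is
isomorphic as an abelian group to `(ℤ/pℤ)^{2^{l-1}}`. -/
theorem primaryComponent_groupCohomology_centralizer (p : ℕ) [Fact p.Prime] (hp : Odd p)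
    (l : ℕ) (hl : 0 < l) (i : ℕ) (hi : l < i) :
    Nonempty
      ((AddCommGroup.primaryComponent
          (groupCohomology
            (Rep.trivial ℤ (Multiplicative (ZMod (2 * p) × (Fin l → ℤ))) ℤ) i) p) ≃+
        (Fin (2 ^ (l - 1)) → ZMod p)) := by
  have h := primaryComponent_groupCohomology_centralizer_general p 1 2
    (Nat.coprime_two_right.2 hp) l hl i hi
  rwa [pow_one] at h
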